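/- Let r > 1 be a real number. There exists a positive integer N such that for every integer n ≥ N there exist a modulus m and a Dirichlet character χ modulo m such that the closure of σ_{r,ℚ,χ}(ℕ) has exactly n connected components; that is, ℤ_{≥N} ⊆ {C_{r,ℚ,χ} : χ a Dirichlet character}. -/

import Mathlib

/-- The twisted divisor function `σ_{r,ℚ,χ}(n) = ∑_{d ∣ n} χ(d) d^{-r}` on positive integers. -/
noncomputable def sigmaQ {m : ℕ} (χ : DirichletCharacter ℂ m) (r : ℝ) (n : ℕ) : ℂ :=
  ∑ d ∈ n.divisors, χ ((d : ℕ) : ZMod m) * (((d : ℝ) ^ (-r) : ℝ) : ℂ)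


theorem aux_primes_many (K : ℕ) : ∃ N : ℕ, ∀ n : ℕ, N ≤ n →
    K ≤ ((Finset.Ioc n (4 * n)).filter Nat.Prime).card := by
  have hev : ∀ᶠ n : ℕ in Filter.atTop, (K + 100 : ℝ) ≤ ((4 * n : ℕ) : ℝ) ^ (1/4 : ℝ) := by
    have h1 : Filter.Tendsto (fun n : ℕ => ((4 * n : ℕ) : ℝ)) Filter.atTop Filter.atTop :=
      tendsto_natCast_atTop_atTop.comp
        (Filter.tendsto_id.const_mul_atTop' (by norm_num : 0 < 4))
    exact ((tendsto_rpow_atTop (by norm_num : (0:ℝ) < 1/4)).comp h1).eventually_ge_atTop _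
  obtain ⟨N, hN⟩ := Filter.eventually_atTop.1 hev
  refine ⟨N + 1, fun n hn => ?_⟩
  have hs := hN n (by omega)
  set s : ℝ := ((4 * n : ℕ) : ℝ) ^ (1/4 : ℝ) with hsdef
  have hK : (0:ℝ) ≤ K := Nat.cast_nonneg K
  have hs4 : ((4 * n : ℕ) : ℝ) = s ^ 4 := by
    rw [hsdef, ← Real.rpow_natCast, ← Real.rpow_mul (Nat.cast_nonneg _)]; norm_num
  have hspos : 0 < s := by linarith
  have hsq : √((4 * n : ℕ) : ℝ) = s ^ 2 := by
    rw [hs4, show s ^ 4 = (s^2)^2 by ring, Real.sqrt_sq (by positivity)]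
  have hlog : Real.log ((4 * n : ℕ) : ℝ) ≤ 4 * s := by
    rw [hs4, Real.log_pow]
    have := Real.log_le_self hspos.le
    push_cast; linarith
  have hlog1 : Real.log (((4 * n : ℕ) : ℝ) + 1) ≤ 8 * s := by
    have : ((4 * n : ℕ) : ℝ) + 1 ≤ ((4 * n : ℕ) : ℝ)^2 := by
      have : (2:ℝ) ≤ ((4 * n : ℕ) : ℝ) := by
        exact_mod_cast (by omega : 2 ≤ 4 * n)
      nlinarith
    calc _ ≤ Real.log (((4 * n : ℕ) : ℝ)^2) := Real.log_le_log (by positivity) this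
      _ = 2 * Real.log ((4 * n : ℕ) : ℝ) := by rw [Real.log_pow]; norm_num
      _ ≤ _ := by linarith
  have hge := Chebyshev.theta_ge (4 * n)
  have hle := Chebyshev.theta_le_log4_mul_x (x := (n:ℝ)) (Nat.cast_nonneg n)
  have hlog4 : Real.log 4 = 2 * Real.log 2 := by
    rw [show (4:ℝ) = 2^2 by norm_num, Real.log_pow]; norm_num
  have hlog2 := Real.log_two_gt_d9
  have hn4 : (n:ℝ) = s^4/4 := by rw [← hs4]; push_cast; ring
  have hdiff : Chebyshev.theta ((4 * n : ℕ) : ℝ) ≤ Chebyshev.theta (n : ℝ) +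
      ((Finset.Ioc n (4 * n)).filter Nat.Prime).card * Real.log ((4 * n : ℕ) : ℝ) := by
    unfold Chebyshev.theta
    rw [Nat.floor_natCast, Nat.floor_natCast]
    have hu : Finset.Ioc 0 (4 * n) = Finset.Ioc 0 n ∪ Finset.Ioc n (4 * n) := by
      rw [Finset.Ioc_union_Ioc_eq_Ioc (by omega) (by omega)]
    rw [hu, Finset.filter_union, Finset.sum_union]
    · gcongr
      rw [← nsmul_eq_mul]
      apply Finset.sum_le_card_nsmul
      intro p hp
      simp only [Finset.mem_filter, Finset.mem_Ioc] at hp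
      exact Real.log_le_log (by exact_mod_cast hp.2.pos) (by exact_mod_cast hp.1.2)
    · apply Finset.disjoint_filter_filter
      rw [Finset.disjoint_left]; intro a; simp only [Finset.mem_Ioc]; omega
  by_contra hlt
  push Not at hlt
  set c := ((Finset.Ioc n (4 * n)).filter Nat.Prime).card with hc
  have hcK : (c:ℝ) ≤ K := by exact_mod_cast hlt.le
  have h1 : (c:ℝ) * Real.log ((4 * n : ℕ) : ℝ) ≤ K * (4 * s) := by
    apply mul_le_mul hcK hlog _ hK
    apply Real.log_nonneg; exact_mod_cast (by omega : 1 ≤ 4 * n)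
  rw [hsq] at hge
  have h2 : 2 * s^2 * Real.log ((4 * n : ℕ) : ℝ) ≤ 2 * s^2 * (4 * s) := by gcongr
  have h3 : s^4 * Real.log 2 - 8 * s - 2 * s^2 * (4 * s) ≤ 2 * Real.log 2 * (s^4/4) + K * (4 * s) := by
    rw [hlog4] at hle; rw [hn4] at hle hdiff
    rw [hs4] at *
    linarith
  have h4 : s^4 * (1/4) ≤ s^4 * (Real.log 2 / 2) := by
    apply mul_le_mul_of_nonneg_left _ (by positivity); linarith
  have h5 : (K:ℝ) * (4 * s) ≤ (s - 100) * (4 * s) := by gcongr; linarith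
  have h6 : s^4 ≥ 100 * s^3 := by
    have : s^4 = s * s^3 := by ring
    rw [this]; gcongr; linarith
  have h7 : s^3 ≥ 100 * s^2 := by
    have : s^3 = s * s^2 := by ring
    rw [this]; gcongr; linarith
  nlinarith

theorem aux_card_cc {n : ℕ} (S : Fin n → Set ℂ) (K : Set ℂ) (hK : K = ⋃ i, S i)
    (hcl : ∀ i, IsClosed (S i)) (hpc : ∀ i, IsConnected (S i))
    (hd : Pairwise (Function.onFun Disjoint S)) :
    Nat.card (ConnectedComponents ↥K) = n := by
  let U : Fin n → Set K := fun i => (↑) ⁻¹' (S i)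
  have hUd : Pairwise (Function.onFun Disjoint U) := fun i j hij => (hd hij).preimage _
  have hUcl : ∀ i, IsClosed (U i) := fun i => (hcl i).preimage continuous_subtype_val
  have hUun : ⋃ i, U i = Set.univ := by
    rw [← Set.preimage_iUnion, ← hK]; simp
  have hUc : ∀ i, IsClopen (U i) := by
    intro i
    refine ⟨hUcl i, ?_⟩
    have : U i = (⋃ j ∈ {j | j ≠ i}, U j)ᶜ := by
      ext x
      simp only [Set.mem_compl_iff, Set.mem_iUnion, not_exists]
      constructor
      · intro hx j hj hxj
        exact Set.disjoint_left.1 (hUd hj) hxj hx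
      · intro h
        have : x ∈ ⋃ i, U i := by rw [hUun]; trivial
        obtain ⟨j, hj⟩ := Set.mem_iUnion.1 this
        by_cases hji : j = i
        · exact hji ▸ hj
        · exact absurd hj (h j hji)
    rw [this, isOpen_compl_iff]
    exact Set.Finite.isClosed_biUnion (Set.toFinite _) (fun j _ => hUcl j)
  have hconn : ∀ i, IsConnected (U i) := by
    intro i
    have himg : ((↑) : K → ℂ) '' (U i) = S i := by
      rw [Set.image_preimage_eq_inter_range, Subtype.range_coe, Set.inter_eq_left, hK]
      exact Set.subset_iUnion S i
    refine ⟨?_, ?_⟩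
    · have := (hpc i).nonempty
      rw [← himg] at this
      exact this.of_image
    · rw [← Topology.IsInducing.subtypeVal.isPreconnected_image, himg]
      exact (hpc i).isPreconnected
  have e := ConnectedComponents.equivOfIsClopen hUc hUd hUun
  rw [Nat.card_congr e]
  have : ∀ i, Unique (ConnectedComponents (U i)) := by
    intro i
    haveI := isConnected_iff_connectedSpace.1 (hconn i)
    exact Classical.choice (unique_iff_subsingleton_and_nonempty _ |>.2 ⟨inferInstance, inferInstance⟩)
  rw [Nat.card_congr (Equiv.sigmaUnique _ _)]
  simp

def AuxRough (Y d : ℕ) : Prop := d ≠ 0 ∧ ∀ p : ℕ, p.Prime → p ∣ d → Y < p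

noncomputable def auxT (r : ℝ) (Y d : ℕ) : ℝ :=
  Set.indicator {d : ℕ | AuxRough Y d} (fun d : ℕ => (d : ℝ) ^ (-r)) d

noncomputable def auxL (r : ℝ) (Y : ℕ) : ℝ := ∑' d : ℕ, auxT r Y d

theorem auxT_nonneg (r : ℝ) (Y d : ℕ) : 0 ≤ auxT r Y d :=
  Set.indicator_nonneg (fun d _ => Real.rpow_nonneg (Nat.cast_nonneg d) _) _

theorem auxT_of {r : ℝ} {Y d : ℕ} (h : AuxRough Y d) : auxT r Y d = (d : ℝ) ^ (-r) :=
  Set.indicator_of_mem (s := {d : ℕ | AuxRough Y d}) h _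

theorem auxT_not {r : ℝ} {Y d : ℕ} (h : ¬ AuxRough Y d) : auxT r Y d = 0 :=
  Set.indicator_of_notMem (s := {d : ℕ | AuxRough Y d}) h _

theorem auxT_summable {r : ℝ} (hr : 1 < r) (Y : ℕ) : Summable (auxT r Y) :=
  (Real.summable_nat_rpow.2 (by linarith : -r < -1)).indicator _

theorem auxRough_one (Y : ℕ) : AuxRough Y 1 :=
  ⟨one_ne_zero, fun _ hp h => absurd (Nat.dvd_one.1 h) hp.one_lt.ne'⟩

theorem auxRough_prime {Y p : ℕ} (hp : p.Prime) (h : Y < p) : AuxRough Y p :=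
  ⟨hp.ne_zero, fun _ hq hqp => ((Nat.prime_dvd_prime_iff_eq hq hp).1 hqp) ▸ h⟩

theorem auxL_sum_le {r : ℝ} (hr : 1 < r) (Y : ℕ) (s : Finset ℕ) :
    ∑ d ∈ s, auxT r Y d ≤ auxL r Y :=
  (auxT_summable hr Y).sum_le_tsum s (fun d _ => auxT_nonneg r Y d)

theorem auxL_one_le {r : ℝ} (hr : 1 < r) (Y : ℕ) : 1 ≤ auxL r Y := by
  have := auxL_sum_le hr Y {1}
  simpa [auxT_of (auxRough_one Y)] using this

theorem auxL_not_prime {r : ℝ} {Y : ℕ} (h : ¬ (Y + 1).Prime) : auxL r Y = auxL r (Y + 1) := by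
  unfold auxL
  congr 1
  ext d
  have : AuxRough Y d ↔ AuxRough (Y + 1) d := by
    unfold AuxRough
    refine and_congr_right fun _ => forall_congr' fun p => forall_congr' fun hp =>
      forall_congr' fun _ => ?_
    have : p ≠ Y + 1 := fun e => h (e ▸ hp)
    omega
  by_cases hd : AuxRough Y d
  · rw [auxT_of hd, auxT_of (this.1 hd)]
  · rw [auxT_not hd, auxT_not (fun h => hd (this.2 h))]

theorem auxL_prime {r : ℝ} (hr : 1 < r) {Y : ℕ} (h : (Y + 1).Prime) :
    auxL r Y = auxL r (Y + 1) + ((Y + 1 : ℕ) : ℝ) ^ (-r) * auxL r Y := by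
  have h2 : ∑' d, (auxT r Y d - auxT r (Y + 1) d) = ((Y + 1 : ℕ) : ℝ) ^ (-r) * auxL r Y := by
    have hinj : Function.Injective (fun d : ℕ => (Y + 1) * d) :=
      fun a b hab => Nat.eq_of_mul_eq_mul_left h.pos hab
    rw [auxL, ← tsum_mul_left, ← hinj.tsum_eq]
    · congr 1
      ext d
      have hn : ¬ AuxRough (Y + 1) ((Y + 1) * d) := fun hh =>
        lt_irrefl _ (hh.2 _ h (dvd_mul_right _ _))
      rw [auxT_not hn, sub_zero]
      have hiff : AuxRough Y ((Y + 1) * d) ↔ AuxRough Y d := by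
        constructor
        · intro hh
          exact ⟨right_ne_zero_of_mul hh.1, fun p hp hpd => hh.2 p hp (hpd.mul_left _)⟩
        · intro hh
          refine ⟨mul_ne_zero h.ne_zero hh.1, fun p hp hpd => ?_⟩
          rcases hp.dvd_mul.1 hpd with h1 | h1
          · rw [(Nat.prime_dvd_prime_iff_eq hp h).1 h1]; omega
          · exact hh.2 p hp h1
      by_cases hd : AuxRough Y d
      · rw [auxT_of hd, auxT_of (hiff.2 hd), Nat.cast_mul,
          Real.mul_rpow (Nat.cast_nonneg _) (Nat.cast_nonneg _)]
      · rw [auxT_not hd, auxT_not (fun h => hd (hiff.1 h)), mul_zero]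
    · intro d hd
      by_contra hnr
      apply hd
      have hnd : ¬ (Y + 1) ∣ d := fun ⟨c, hc⟩ => hnr ⟨c, hc.symm⟩
      have hiff : AuxRough Y d ↔ AuxRough (Y + 1) d := by
        unfold AuxRough
        refine and_congr_right fun _ => forall_congr' fun p => forall_congr' fun hp =>
          forall_congr' fun hpd => ?_
        have : p ≠ Y + 1 := fun e => hnd (e ▸ hpd)
        omega
      by_cases hd : AuxRough Y d
      · simp only [auxT_of hd, auxT_of (hiff.1 hd), sub_self]
      · simp only [auxT_not hd, auxT_not (fun h => hd (hiff.2 h)), sub_self]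
  rw [← h2, (auxT_summable hr Y).tsum_sub (auxT_summable hr (Y+1))]
  unfold auxL; ring

theorem auxL_tendsto {r : ℝ} (hr : 1 < r) : Filter.Tendsto (auxL r) Filter.atTop (nhds 1) := by
  have hs := Real.summable_nat_rpow.2 (by linarith : -r < -1)
  have h1 : ∑' d, auxT r 1 d * 0 = 0 := by simp
  have key : Filter.Tendsto (fun Y => ∑' d, auxT r Y d) Filter.atTop
      (nhds (∑' d : ℕ, if d = 1 then (1:ℝ) else 0)) := by
    apply tendsto_tsum_of_dominated_convergence hs
    · intro d
      apply tendsto_const_nhds.congr'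
      filter_upwards [Filter.eventually_ge_atTop d] with Y hY
      by_cases hd : d = 1
      · subst hd; simp [auxT_of (auxRough_one Y)]
      · rw [if_neg hd, auxT_not]
        intro hR
        obtain ⟨p, hp, hpd⟩ := Nat.exists_prime_and_dvd hd
        have := hR.2 p hp hpd
        have := Nat.le_of_dvd (Nat.pos_of_ne_zero hR.1) hpd
        omega
    · filter_upwards with Y d
      rw [Real.norm_of_nonneg (auxT_nonneg _ _ _)]
      exact Set.indicator_le_self' (fun d _ => Real.rpow_nonneg (Nat.cast_nonneg d) _) d
  rw [tsum_ite_eq] at key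
  exact key

theorem auxL_ge {r : ℝ} (hr : 1 < r) : ∃ N : ℕ, 0 < N ∧ ∀ Y : ℕ, N ≤ Y →
    1 + (Y : ℝ) ^ (-r) ≤ auxL r Y := by
  obtain ⟨N, hN⟩ := aux_primes_many ⌈(4:ℝ) ^ r⌉₊
  refine ⟨N + 1, by omega, fun Y hY => ?_⟩
  have hc := hN Y (by omega)
  set s := (Finset.Ioc Y (4 * Y)).filter Nat.Prime with hs
  have h1 : (1 : ℕ) ∉ s := by simp [hs, Nat.not_prime_one]
  have hle := auxL_sum_le hr Y (insert 1 s)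
  rw [Finset.sum_insert h1, auxT_of (auxRough_one Y)] at hle
  have hYpos : (0:ℝ) < Y := by exact_mod_cast (by omega : 0 < Y)
  have h2 : s.card • ((4 * (Y:ℝ)) ^ (-r)) ≤ ∑ d ∈ s, auxT r Y d := by
    apply Finset.card_nsmul_le_sum
    intro p hp
    simp only [hs, Finset.mem_filter, Finset.mem_Ioc] at hp
    rw [auxT_of (auxRough_prime hp.2 hp.1.1)]
    apply Real.rpow_le_rpow_of_nonpos
    · exact_mod_cast hp.2.pos
    · exact_mod_cast hp.1.2
    · linarith
  rw [nsmul_eq_mul] at h2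
  have h3 : (4:ℝ)^r ≤ s.card := (Nat.le_ceil _).trans (by exact_mod_cast hc)
  have h4 : (Y:ℝ)^(-r) ≤ s.card * ((4 * (Y:ℝ)) ^ (-r)) := by
    rw [Real.mul_rpow (by norm_num) hYpos.le, ← mul_assoc]
    have h5 : (4:ℝ)^r * (4:ℝ)^(-r) = 1 := by
      rw [← Real.rpow_add (by norm_num)]; simp
    have h6 : 1 ≤ s.card * (4:ℝ)^(-r) := by
      rw [← h5]; gcongr
    have := Real.rpow_nonneg hYpos.le (-r)
    nlinarith
  simp at hle
  linarith


noncomputable def auxA (x : ℝ) (j : ℕ) : ℝ := ∑ i ∈ Finset.range (j + 1), x ^ i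

theorem auxA_succ (x : ℝ) (j : ℕ) : auxA x (j + 1) = auxA x j + x ^ (j + 1) :=
  Finset.sum_range_succ _ _

theorem auxA_succ' (x : ℝ) (j : ℕ) : auxA x (j + 1) = 1 + x * auxA x j := by
  unfold auxA
  rw [Finset.sum_range_succ', Finset.mul_sum, add_comm]
  simp [pow_succ, mul_comm]

theorem auxA_zero (x : ℝ) : auxA x 0 = 1 := by simp [auxA]

theorem auxA_mono {x : ℝ} (hx : 0 ≤ x) : Monotone (auxA x) :=
  monotone_nat_of_le_succ fun j => by rw [auxA_succ]; have := pow_nonneg hx (j + 1); linarith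

theorem auxA_one_le {x : ℝ} (hx : 0 ≤ x) (j : ℕ) : 1 ≤ auxA x j := by
  rw [← auxA_zero x]; exact auxA_mono hx (Nat.zero_le j)

theorem auxA_tendsto {x : ℝ} (hx : 0 ≤ x) (hx1 : x < 1) :
    Filter.Tendsto (auxA x) Filter.atTop (nhds (1 - x)⁻¹) :=
  ((hasSum_geometric_of_lt_one hx hx1).tendsto_sum_nat).comp (Filter.tendsto_add_atTop_nat 1)

theorem auxA_le {x : ℝ} (hx : 0 ≤ x) (hx1 : x < 1) (j : ℕ) : auxA x j ≤ (1 - x)⁻¹ :=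
  (auxA_mono hx).ge_of_tendsto (auxA_tendsto hx hx1) j

theorem auxA_step {x L : ℝ} (hx : 0 ≤ x) (hL : 1 ≤ L) {J : ℕ}
    (h : auxA x (J + 1) ≤ auxA x J * L) : ∀ j, J ≤ j → auxA x (j + 1) ≤ auxA x j * L := by
  intro j hj
  induction j, hj using Nat.le_induction with
  | base => exact h
  | succ j _ ih =>
    rw [auxA_succ' x (j + 1), auxA_succ' x j] at *
    have := mul_le_mul_of_nonneg_left ih hx
    linarith

theorem auxA_cover {x L z : ℝ} (hx : 0 ≤ x) (hx1 : x < 1) {J : ℕ}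
    (h : ∀ j, J ≤ j → auxA x (j + 1) ≤ auxA x j * L)
    (hz : auxA x J ≤ z) (hz' : z < (1 - x)⁻¹ * L) :
    ∃ j, J ≤ j ∧ auxA x j ≤ z ∧ z < auxA x j * L := by
  classical
  by_cases he : ∃ i, z < auxA x i
  · have hi := Nat.find_spec he
    have hmin := fun k hk => Nat.find_min he (m := k) hk
    generalize Nat.find he = i at hi hmin
    have hJi : J < i := by
      by_contra hcon
      have := auxA_mono hx (not_lt.1 hcon)
      linarith
    obtain ⟨j, rfl⟩ : ∃ j, i = j + 1 := ⟨i - 1, by omega⟩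
    refine ⟨j, by omega, not_lt.1 (hmin j (by omega)), hi.trans_le (h j (by omega))⟩
  · push Not at he
    have ht := (auxA_tendsto hx hx1).mul_const L
    obtain ⟨i, hi1, hi2⟩ := ((ht.eventually_const_lt hz').and (Filter.eventually_ge_atTop J)).exists
    exact ⟨i, hi2, he i, hi1⟩

/-- The modulus: product of odd primes up to `Y`. -/
def auxM (Y : ℕ) : ℕ := ∏ p ∈ (Finset.range (Y + 1)).filter (fun p => p.Prime ∧ p ≠ 2), p

theorem auxM_pos (Y : ℕ) : 0 < auxM Y :=
  Finset.prod_pos fun p hp => (Finset.mem_filter.1 hp).2.1.pos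

theorem auxM_coprime {Y d : ℕ} : Nat.Coprime d (auxM Y) ↔
    ∀ p : ℕ, p.Prime → p ∣ d → p = 2 ∨ Y < p := by
  unfold auxM
  rw [Nat.coprime_prod_right_iff]
  constructor
  · intro h p hp hpd
    by_contra hcon
    push Not at hcon
    have := h p (by simp only [Finset.mem_filter, Finset.mem_range]; exact ⟨by omega, hp, hcon.1⟩)
    exact hp.one_lt.ne' (Nat.dvd_one.1 (this ▸ Nat.dvd_gcd hpd dvd_rfl))
  · intro h p hp
    simp only [Finset.mem_filter, Finset.mem_range] at hp
    rw [Nat.coprime_comm, hp.2.1.coprime_iff_not_dvd]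
    intro hpd
    rcases h p hp.2.1 hpd with h1 | h1
    · exact hp.2.2 h1
    · omega

noncomputable def auxF (r : ℝ) (m k : ℕ) : ℝ :=
  ∑ d ∈ k.divisors, if Nat.Coprime d m then (d : ℝ) ^ (-r) else 0

theorem auxF_eq (r : ℝ) (m k : ℕ) :
    sigmaQ (1 : DirichletCharacter ℂ m) r k = ((auxF r m k : ℝ) : ℂ) := by
  unfold sigmaQ auxF
  rw [Complex.ofReal_sum]
  refine Finset.sum_congr rfl fun d _ => ?_
  by_cases h : Nat.Coprime d m
  · rw [if_pos h, MulChar.one_apply ((ZMod.isUnit_iff_coprime d m).2 h), one_mul]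
  · rw [if_neg h, MulChar.map_nonunit _ (fun hu => h ((ZMod.isUnit_iff_coprime d m).1 hu))]
    simp

theorem auxF_one (r : ℝ) (m : ℕ) : auxF r m 1 = 1 := by simp [auxF]

theorem auxF_mul (r : ℝ) (m : ℕ) {q k : ℕ} (hq : q.Prime) (hqm : Nat.Coprime q m)
    (hqk : ¬ q ∣ k) (j : ℕ) :
    auxF r m (q ^ j * k) = auxA ((q : ℝ) ^ (-r)) j * auxF r m k := by
  have hcop : Nat.Coprime (q ^ j) k := Nat.Coprime.pow_left j ((hq.coprime_iff_not_dvd).2 hqk)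
  have h1 : auxA ((q : ℝ) ^ (-r)) j = auxF r m (q ^ j) := by
    unfold auxA auxF
    rw [Nat.sum_divisors_prime_pow hq]
    refine Finset.sum_congr rfl fun i _ => ?_
    rw [if_pos (Nat.Coprime.pow_left i hqm), Nat.cast_pow, ← Real.rpow_natCast, ← Real.rpow_natCast,
      ← Real.rpow_mul (Nat.cast_nonneg _), ← Real.rpow_mul (Nat.cast_nonneg _), mul_comm]
  rw [h1]
  unfold auxF
  rw [Finset.sum_mul_sum, ← Finset.sum_product', Nat.divisors_mul, Finset.mul_def,
    Finset.sum_image hcop.mul_injOn_divisors]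
  refine Finset.sum_congr rfl fun d _ => ?_
  simp only [Nat.coprime_mul_iff_left, Nat.cast_mul,
    Real.mul_rpow (Nat.cast_nonneg d.1) (Nat.cast_nonneg d.2)]
  split_ifs <;> simp_all

theorem auxF_one_le (r : ℝ) (m : ℕ) {k : ℕ} (hk : 0 < k) : 1 ≤ auxF r m k := by
  have : (if Nat.Coprime 1 m then ((1 : ℕ) : ℝ) ^ (-r) else 0) ≤ auxF r m k := by
    apply Finset.single_le_sum (f := fun d : ℕ => if Nat.Coprime d m then (d : ℝ) ^ (-r) else 0)
    · intro d _
      split_ifs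
      · exact Real.rpow_nonneg (Nat.cast_nonneg _) _
      · exact le_rfl
    · simp [hk.ne']
  simpa using this

theorem auxF_le {r : ℝ} (hr : 1 < r) {Y k : ℕ} (hk : ¬ 2 ∣ k) :
    auxF r (auxM Y) k ≤ auxL r Y := by
  refine le_trans ?_ (auxL_sum_le hr Y k.divisors)
  refine Finset.sum_le_sum fun d hd => ?_
  split_ifs with h
  · rw [auxT_of]
    have hd' := Nat.mem_divisors.1 hd
    refine ⟨fun h0 => hd'.2 (by simpa [h0] using hd'.1), fun p hp hpd => ?_⟩
    rcases auxM_coprime.1 h p hp hpd with h2 | h2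
    · exact absurd ((h2 ▸ hpd).trans hd'.1) hk
    · exact h2
  · exact auxT_nonneg _ _ _

theorem aux_x_pos {r : ℝ} {q : ℕ} (hq : q.Prime) : 0 < (q : ℝ) ^ (-r) :=
  Real.rpow_pos_of_pos (by exact_mod_cast hq.pos) _

theorem aux_x_lt {r : ℝ} (hr : 1 < r) {q : ℕ} (hq : q.Prime) : (q : ℝ) ^ (-r) < 1 :=
  Real.rpow_lt_one_of_one_lt_of_neg (by exact_mod_cast hq.one_lt) (by linarith)

theorem aux_tail {r : ℝ} (hr : 1 < r) {Y : ℕ} (hY2 : 2 ≤ Y)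
    (hY : ∀ Z : ℕ, Y ≤ Z → 1 + (Z : ℝ) ^ (-r) ≤ auxL r Z)
    {z : ℝ} (hz : 1 ≤ z) (hz' : z < auxL r Y) (Z : ℕ) (hZ : Y ≤ Z) :
    ∃ k : ℕ, 0 < k ∧ (∀ p : ℕ, p.Prime → p ∣ k → Y < p ∧ p ≤ Z) ∧
      auxF r (auxM Y) k ≤ z ∧ z < auxF r (auxM Y) k * auxL r Z := by
  induction Z, hZ using Nat.le_induction with
  | base =>
    refine ⟨1, one_pos, fun p hp h => absurd (Nat.dvd_one.1 h) hp.one_lt.ne', ?_, ?_⟩ <;>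
      rw [auxF_one] <;> linarith
  | succ Z hZ ih =>
    obtain ⟨k, hk, hkp, h1, h2⟩ := ih
    by_cases hp : (Z + 1).Prime
    · have hrec := auxL_prime hr hp
      have hx0 := aux_x_pos (r := r) hp
      have hx1 := aux_x_lt hr hp
      have hL := hY (Z + 1) (by omega)
      set x := ((Z + 1 : ℕ) : ℝ) ^ (-r) with hx
      have hF := auxF_one_le r (auxM Y) hk
      set f := auxF r (auxM Y) k with hf
      have hF0 : 0 < f := by linarith
      have hL' : auxL r Z = (1 - x)⁻¹ * auxL r (Z + 1) := by
        rw [eq_inv_mul_iff_mul_eq₀ (by linarith)]; linarith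
      have hst : ∀ j, 0 ≤ j → auxA x (j + 1) ≤ auxA x j * auxL r (Z + 1) := by
        apply auxA_step hx0.le (by linarith)
        rw [auxA_succ, auxA_zero]; simpa using hL
      obtain ⟨j, -, hj1, hj2⟩ := auxA_cover (z := z / f) hx0.le hx1 hst
        (by rw [auxA_zero, le_div_iff₀ hF0]; linarith)
        (by rw [← hL', div_lt_iff₀ hF0]; linarith)
      have hnd : ¬ (Z + 1) ∣ k := fun hd => by
        have := (hkp _ hp hd).2
        omega
      have hcop : Nat.Coprime (Z + 1) (auxM Y) := by
        rw [auxM_coprime]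
        intro p hp' hpd
        right
        rw [(Nat.prime_dvd_prime_iff_eq hp' hp).1 hpd]; omega
      refine ⟨(Z + 1) ^ j * k, by positivity, ?_, ?_, ?_⟩
      · intro p hp' hpd
        rcases hp'.dvd_mul.1 hpd with h | h
        · rw [(Nat.prime_dvd_prime_iff_eq hp' hp).1 (hp'.dvd_of_dvd_pow h)]; omega
        · have := hkp p hp' h; omega
      · rw [auxF_mul r _ hp hcop hnd, ← hx, ← hf]
        exact (le_div_iff₀ hF0).1 hj1
      · rw [auxF_mul r _ hp hcop hnd, ← hx, ← hf]
        have := (div_lt_iff₀ hF0).1 hj2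
        linarith
    · rw [← auxL_not_prime hp]
      exact ⟨k, hk, fun p hp h => ⟨(hkp p hp h).1, by have := (hkp p hp h).2; omega⟩, h1, h2⟩

theorem aux_block {r : ℝ} (hr : 1 < r) {Y : ℕ} (hY2 : 2 ≤ Y)
    (hY : ∀ Z : ℕ, Y ≤ Z → 1 + (Z : ℝ) ^ (-r) ≤ auxL r Z) (j : ℕ) {z : ℝ}
    (hz : auxA ((2 : ℕ) ^ (-r) : ℝ) j ≤ z) (hz' : z < auxA ((2 : ℕ) ^ (-r) : ℝ) j * auxL r Y) :
    z ∈ closure (auxF r (auxM Y) '' {k : ℕ | 0 < k}) := by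
  have hx0 := aux_x_pos (r := r) Nat.prime_two
  set x := ((2 : ℕ) : ℝ) ^ (-r) with hx
  have ha := auxA_one_le hx0.le j
  set a := auxA x j with hadef
  have ha0 : 0 < a := by linarith
  rw [Metric.mem_closure_iff]
  intro ε hε
  have hzpos : 0 < z := by linarith
  have ht : Filter.Tendsto (fun Z => z * (auxL r Z - 1)) Filter.atTop (nhds 0) := by
    have := ((auxL_tendsto hr).sub_const 1).const_mul z
    simpa using this
  obtain ⟨Z, hZ1, hZ2⟩ := ((ht.eventually_lt_const hε).and (Filter.eventually_ge_atTop Y)).exists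
  obtain ⟨k, hk, hkp, h1, h2⟩ := aux_tail hr hY2 hY (z := z / a)
    (by rw [le_div_iff₀ ha0]; linarith) (by rw [div_lt_iff₀ ha0]; linarith) Z hZ2
  have hnd : ¬ 2 ∣ k := fun h => by have := (hkp 2 Nat.prime_two h).1; omega
  have hcop : Nat.Coprime 2 (auxM Y) := by
    rw [auxM_coprime]
    intro p hp hpd
    left
    exact (Nat.prime_dvd_prime_iff_eq hp Nat.prime_two).1 hpd
  refine ⟨_, ⟨2 ^ j * k, by simp only [Set.mem_ofPred_eq]; positivity, rfl⟩, ?_⟩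
  rw [auxF_mul r _ Nat.prime_two hcop hnd, ← hx, ← hadef]
  set f := auxF r (auxM Y) k
  have h3 : f * a ≤ z := (le_div_iff₀ ha0).1 h1
  have h4 : z < f * auxL r Z * a := (div_lt_iff₀ ha0).1 h2
  have hL := auxL_one_le hr Z
  rw [Real.dist_eq, abs_of_nonneg (by linarith)]
  have : f * a * (auxL r Z - 1) ≤ z * (auxL r Z - 1) := by
    apply mul_le_mul_of_nonneg_right h3; linarith
  nlinarith

noncomputable def auxS (x L : ℝ) (J j : ℕ) : Set ℝ :=
  if j < J then Set.Icc (auxA x j) (auxA x j * L) else Set.Icc (auxA x J) ((1 - x)⁻¹ * L)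

theorem aux_closure {r : ℝ} (hr : 1 < r) {Y : ℕ} (hY2 : 2 ≤ Y)
    (hY : ∀ Z : ℕ, Y ≤ Z → 1 + (Z : ℝ) ^ (-r) ≤ auxL r Z) (hL : 1 < auxL r Y) (J : ℕ)
    (hJ : ∀ j, J ≤ j → auxA ((2 : ℕ) ^ (-r) : ℝ) (j + 1) ≤ auxA ((2 : ℕ) ^ (-r) : ℝ) j * auxL r Y) :
    closure (auxF r (auxM Y) '' {k : ℕ | 0 < k}) =
      ⋃ j : Fin (J + 1), auxS ((2 : ℕ) ^ (-r) : ℝ) (auxL r Y) J j := by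
  have hx0 := aux_x_pos (r := r) Nat.prime_two
  have hx1 := aux_x_lt hr Nat.prime_two
  have hblock := fun (j : ℕ) (z : ℝ) => aux_block hr hY2 hY j (z := z)
  set x := ((2 : ℕ) : ℝ) ^ (-r) with hx
  set L := auxL r Y with hLdef
  apply subset_antisymm
  · apply closure_minimal
    · rintro _ ⟨k, hk, rfl⟩
      have hk : 0 < k := hk
      obtain ⟨j, k', hk', rfl⟩ := Nat.exists_eq_pow_mul_and_not_dvd hk.ne' 2 (by norm_num)
      have hcop : Nat.Coprime 2 (auxM Y) := by
        rw [auxM_coprime]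
        intro p hp hpd
        left
        exact (Nat.prime_dvd_prime_iff_eq hp Nat.prime_two).1 hpd
      have hk'0 : 0 < k' := Nat.pos_of_ne_zero fun h => hk' (h ▸ dvd_zero 2)
      rw [auxF_mul r _ Nat.prime_two hcop hk', ← hx]
      have h1 := auxF_one_le r (auxM Y) hk'0
      have h2 := auxF_le hr (Y := Y) hk'
      rw [← hLdef] at h2
      have ha := auxA_one_le hx0.le j
      rw [Set.mem_iUnion]
      by_cases hjJ : j < J
      · refine ⟨⟨j, by omega⟩, ?_⟩
        simp only [auxS, if_pos hjJ, Set.mem_Icc]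
        constructor <;> nlinarith
      · refine ⟨⟨J, by omega⟩, ?_⟩
        simp only [auxS, lt_irrefl, if_false, Set.mem_Icc]
        have h3 := auxA_mono hx0.le (not_lt.1 hjJ)
        have h4 := auxA_le hx0.le hx1 j
        constructor
        · nlinarith
        · apply mul_le_mul h4 h2 (by linarith) (by linarith)
    · apply isClosed_iUnion_of_finite
      intro j
      unfold auxS
      split_ifs <;> exact isClosed_Icc
  · apply Set.iUnion_subset
    intro j
    unfold auxS
    split_ifs with h
    · have ha := auxA_one_le hx0.le j
      rw [← closure_Ico (by nlinarith)]
      apply closure_minimal _ isClosed_closure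
      rintro z ⟨hz1, hz2⟩
      exact hblock j z hz1 hz2
    · have ha := auxA_one_le hx0.le J
      have h4 := auxA_le hx0.le hx1 J
      rw [← closure_Ico (by nlinarith)]
      apply closure_minimal _ isClosed_closure
      rintro z ⟨hz1, hz2⟩
      obtain ⟨j, -, hj1, hj2⟩ := auxA_cover hx0.le hx1 hJ hz1 hz2
      exact hblock j z hj1 hj2

theorem aux_count {r : ℝ} (hr : 1 < r) {Y : ℕ} (hY2 : 2 ≤ Y)
    (hY : ∀ Z : ℕ, Y ≤ Z → 1 + (Z : ℝ) ^ (-r) ≤ auxL r Z) (hL : 1 < auxL r Y) (J : ℕ)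
    (hJ : ∀ j, J ≤ j → auxA ((2 : ℕ) ^ (-r) : ℝ) (j + 1) ≤ auxA ((2 : ℕ) ^ (-r) : ℝ) j * auxL r Y)
    (hJ' : ∀ j, j < J → auxA ((2 : ℕ) ^ (-r) : ℝ) j * auxL r Y < auxA ((2 : ℕ) ^ (-r) : ℝ) (j + 1)) :
    Nat.card (ConnectedComponents ↥(closure
      (sigmaQ (1 : DirichletCharacter ℂ (auxM Y)) r '' {k : ℕ | 0 < k}))) = J + 1 := by
  have hx0 := aux_x_pos (r := r) Nat.prime_two
  have hx1 := aux_x_lt hr Nat.prime_two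
  have hcl := aux_closure hr hY2 hY hL J hJ
  set x := ((2 : ℕ) : ℝ) ^ (-r) with hx
  set L := auxL r Y with hLdef
  have hce : Topology.IsClosedEmbedding (fun t : ℝ => (t : ℂ)) :=
    Complex.isometry_ofReal.isClosedEmbedding
  have himg : sigmaQ (1 : DirichletCharacter ℂ (auxM Y)) r '' {k : ℕ | 0 < k} =
      (fun t : ℝ => (t : ℂ)) '' (auxF r (auxM Y) '' {k : ℕ | 0 < k}) := by
    rw [Set.image_image]
    exact Set.image_congr fun k _ => auxF_eq r _ k
  apply aux_card_cc (fun j : Fin (J + 1) => (fun t : ℝ => (t : ℂ)) '' (auxS x L J j))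
  · rw [himg, hce.closure_image_eq, hcl, Set.image_iUnion]
  · intro j
    apply hce.isClosedMap
    unfold auxS
    split_ifs <;> exact isClosed_Icc
  · intro j
    refine IsConnected.image ?_ _ hce.continuous.continuousOn
    unfold auxS
    split_ifs
    · have ha := auxA_one_le hx0.le j
      exact isConnected_Icc (by nlinarith)
    · have ha := auxA_one_le hx0.le J
      have h4 := auxA_le hx0.le hx1 J
      exact isConnected_Icc (by nlinarith)
  · have key : ∀ i j : Fin (J + 1), i < j → Disjoint ((fun t : ℝ => (t : ℂ)) '' (auxS x L J i))
        ((fun t : ℝ => (t : ℂ)) '' (auxS x L J j)) := by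
      intro i j hij
      rw [Set.disjoint_image_iff hce.injective, Set.disjoint_left]
      intro t hti htj
      have hij' : (i : ℕ) < j := hij
      have hjJ : (j : ℕ) ≤ J := by omega
      have h1 : t ≤ auxA x i * L := by
        unfold auxS at hti
        rw [if_pos (by omega)] at hti
        exact hti.2
      have h2 : auxA x j ≤ t := by
        unfold auxS at htj
        split_ifs at htj with h
        · exact htj.1
        · have : (j : ℕ) = J := by omega
          rw [this]; exact htj.1
      have h3 := hJ' i (by omega)
      have h4 := auxA_mono hx0.le (show (i : ℕ) + 1 ≤ j from hij')
      linarith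
    intro i j hij
    rcases lt_or_gt_of_ne hij with h | h
    · exact key i j h
    · exact (key j i h).symm

/-- For fixed `r > 1`, every sufficiently large positive integer is the number of connected
components of the closure of the image of `σ_{r,ℚ,χ}` for some Dirichlet character `χ`. -/
theorem stmt1 (r : ℝ) (hr : 1 < r) :
    ∃ N : ℕ, 0 < N ∧ ∀ n : ℕ, N ≤ n →
      ∃ (m : ℕ) (χ : DirichletCharacter ℂ m), 0 < m ∧
        Nat.card (ConnectedComponents
          ↥(closure (sigmaQ χ r '' {k : ℕ | 0 < k}))) = n := by
  classical
  have hx0 := aux_x_pos (r := r) Nat.prime_two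
  have hx1 := aux_x_lt hr Nat.prime_two
  obtain ⟨N1, hN1, hge⟩ := auxL_ge hr
  have h2x : 2 * ((2 : ℕ) : ℝ) ^ (-r) < 1 := by
    have : ((2 : ℕ) : ℝ) ^ (-r) < ((2 : ℕ) : ℝ) ^ (-1 : ℝ) :=
      Real.rpow_lt_rpow_of_exponent_lt (by norm_num) (by linarith)
    rw [Real.rpow_neg_one] at this
    norm_num at this ⊢
    linarith
  have hcount := fun (Y : ℕ) h1 h2 h3 J => aux_count hr (Y := Y) h1 h2 h3 J
  set x := ((2 : ℕ) : ℝ) ^ (-r) with hx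
  have hεt : Filter.Tendsto (fun Y : ℕ => (Y : ℝ) ^ (-r)) Filter.atTop (nhds 0) :=
    (tendsto_rpow_neg_atTop (by linarith)).comp tendsto_natCast_atTop_atTop
  obtain ⟨N2, hN2⟩ := Filter.eventually_atTop.1
    (hεt.eventually_le_const (show (0 : ℝ) < 1 - 2 * x by linarith))
  set Y0 := N1 + N2 + 2 with hY0
  have hLgt : ∀ Y, Y0 ≤ Y → 1 < auxL r Y := by
    intro Y hY
    have h1 := hge Y (by omega)
    have h2 : 0 < (Y : ℝ) ^ (-r) := Real.rpow_pos_of_pos (by exact_mod_cast (by omega : 0 < Y)) _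
    linarith
  obtain ⟨J0, hJ0⟩ : ∃ j, auxA x (j + 1) ≤ auxA x j * auxL r Y0 := by
    obtain ⟨j, hj⟩ := ((tendsto_pow_atTop_nhds_zero_of_lt_one hx0.le hx1).eventually_le_const
      (show 0 < auxL r Y0 - 1 by linarith [hLgt Y0 le_rfl])).exists
    refine ⟨j, ?_⟩
    rw [auxA_succ]
    have h1 := auxA_one_le hx0.le j
    have h2 : x ^ (j + 1) ≤ x ^ j := pow_le_pow_of_le_one hx0.le hx1.le (Nat.le_succ j)
    have h3 := hLgt Y0 le_rfl
    nlinarith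
  have hJ0' := auxA_step hx0.le (hLgt Y0 le_rfl).le hJ0
  refine ⟨J0 + 2, by omega, fun n hn => ?_⟩
  obtain ⟨J, rfl⟩ : ∃ J, n = J + 1 + 1 := ⟨n - 2, by omega⟩
  have hex : ∃ Y, Y0 ≤ Y ∧ auxA x J * auxL r Y < auxA x (J + 1) := by
    have ht := (auxL_tendsto hr).const_mul (auxA x J)
    have : auxA x J * 1 < auxA x (J + 1) := by
      rw [auxA_succ]; have := pow_pos hx0 (J + 1); linarith
    obtain ⟨Y, h1, h2⟩ := ((ht.eventually_lt_const this).and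
      (Filter.eventually_ge_atTop Y0)).exists
    exact ⟨Y, h2, h1⟩
  obtain ⟨hYY, hYlt⟩ := Nat.find_spec hex
  have hmin := fun k hk => Nat.find_min hex (m := k) hk
  generalize Nat.find hex = Y at hYY hYlt hmin
  have hne : Y ≠ Y0 := by
    rintro rfl
    have := hJ0' J (by omega)
    linarith
  obtain ⟨Z, rfl⟩ : ∃ Z, Y = Z + 1 := ⟨Y - 1, by omega⟩
  have hZ : auxA x (J + 1) ≤ auxA x J * auxL r Z := by
    by_contra hcon
    exact hmin Z (by omega) ⟨by omega, not_le.1 hcon⟩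
  have hp : (Z + 1).Prime := by
    by_contra hp
    rw [auxL_not_prime hp] at hZ
    linarith
  have hrec := auxL_prime hr hp
  have hL1 := hge (Z + 1) (by omega)
  have hε := hN2 (Z + 1) (by omega)
  have hε0 := aux_x_pos (r := r) hp
  have hLY := hLgt (Z + 1) hYY
  refine ⟨auxM (Z + 1), 1, auxM_pos _, ?_⟩
  apply hcount (Z + 1) (by omega) (fun W hW => hge W (by omega)) hLY (J + 1)
  · apply auxA_step hx0.le hLY.le
    set L := auxL r (Z + 1)
    set L' := auxL r Z
    set ε := ((Z + 1 : ℕ) : ℝ) ^ (-r)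
    have ha := auxA_one_le hx0.le J
    rw [auxA_succ x (J + 1)]
    have ha2 : auxA x J ≤ auxA x (J + 1) := auxA_mono hx0.le (Nat.le_succ J)
    rw [auxA_succ x J] at hZ
    -- (1-ε)(L'-1) = L - 1 + ε ≤ 2 (L-1)
    have e1 : (1 - ε) * (L' - 1) ≤ 2 * (L - 1) := by linarith
    have e2 : 2 * x * (L' - 1) ≤ 2 * (L - 1) := by
      have : 0 ≤ L' - 1 := by linarith [auxL_one_le hr Z]
      have : 2 * x * (L' - 1) ≤ (1 - ε) * (L' - 1) :=
        mul_le_mul_of_nonneg_right (by linarith) this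
      linarith
    have e3 : x ^ (J + 1) ≤ auxA x J * (L' - 1) := by linarith
    have e4 : x ^ (J + 1 + 1) ≤ x * (auxA x J * (L' - 1)) := by
      rw [pow_succ' x (J + 1)]; exact mul_le_mul_of_nonneg_left e3 hx0.le
    have e5 : auxA x J * (x * (L' - 1)) ≤ auxA x J * (L - 1) :=
      mul_le_mul_of_nonneg_left (by linarith) (by linarith)
    have e6 : auxA x J * (L - 1) ≤ auxA x (J + 1) * (L - 1) :=
      mul_le_mul_of_nonneg_right ha2 (by linarith)
    linarith
  · intro j hj
    by_contra hcon
    have := auxA_step hx0.le hLY.le (not_lt.1 hcon) J (by omega)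
    linarith
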